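/- Let X be a finite connected poset and F a field with char(F) ∉ {2, 3}. Then every bijective F-linear map φ: I(X,F) → I(X,F) that preserves tripotents (φ(f)³ = φ(f) whenever f³ = f) is of the form φ = r·ψ, where r ∈ {−1, 1} and ψ is either an automorphism or an anti-automorphism of I(X,F). -/

import Mathlib

open IncidenceAlgebra

/-- A poset is connected if any two elements can be joined by a sequence of elements
in which consecutive elements are comparable. -/
def PosetConnected (X : Type*) [PartialOrder X] : Prop :=
  ∀ x y : X, Relation.ReflTransGen (fun a b : X => a ≤ b ∨ b ≤ a) x y

/-!
Let `φ` preserve tripotents. If `p` and `q` are orthogonal idempotents, then `φ p`, `φ q` and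
`φ p ± φ q` are tripotents, which forces `φ p * φ q = 0` as `2` and `3` are regular. Taking
`q = 1 - p` gives `φ p * φ 1 = (φ p)² = φ 1 * φ p`. Idempotents span the incidence algebra, so
`φ 1` is central with square `1`, and connectedness leaves `φ 1 = ±1`.

It remains to treat a unital `φ`, and such a map preserves idempotents. A comparison on matrix units
shows that it is a Jordan homomorphism. The images `φ e_xx` are orthogonal nonzero idempotents, as
many as `X` has elements, so each has a single nonzero diagonal entry. Hence for `x < y` exactly one
of the Peirce components `φ e_xx * φ e_xy * φ e_yy` and `φ e_yy * φ e_xy * φ e_xx` is nonzero.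
Comparabilities that share an element choose the same alternative, so by connectedness all of them
do. The first alternative makes `φ` multiplicative and the second makes it antimultiplicative.
-/

section Ring

variable {A B 𝓕 : Type*} [Ring A] [Ring B]

theorem mul_eq_zero_of_tripotent (h2 : IsSMulRegular A 2) (h3 : IsSMulRegular A 3) {a b : A}
    (ha : a ^ 3 = a) (hb : b ^ 3 = b) (hadd : (a + b) ^ 3 = a + b) (hsub : (a - b) ^ 3 = a - b) :
    a * b = 0 := by
  have haab : a * a * b + a * b * a + b * a * a = 0 := by
    refine h2.right_eq_zero_of_smul ?_
    linear_combination (norm := noncomm_ring) hadd - hsub - 2 * hb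
  have hcomm : a * b = b * a := by
    linear_combination (norm := noncomm_ring) a * haab - haab * a - ha * b + b * ha
  have haab_zero : a * a * b = 0 := by
    refine h3.right_eq_zero_of_smul ?_
    linear_combination (norm := noncomm_ring) haab + 2 * a * hcomm + hcomm * a
  linear_combination (norm := noncomm_ring) a * haab_zero - ha * b

theorem mul_eq_zero_of_anticommute (h2 : IsSMulRegular A 2) {p a : A} (hp : IsIdempotentElem p)
    (h : p * a + a * p = 0) : p * a = 0 := by
  refine h2.right_eq_zero_of_smul ?_
  linear_combination (norm := noncomm_ring) h + p * h - h * p - hp.eq * a + a * hp.eq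

theorem mul_eq_zero_of_mul_eq_zero_between {p q a b : A} (hpq : p * q = 0) (ha : a * p = a)
    (hb : q * b = b) : a * b = 0 := by
  rw [← ha, ← hb, mul_assoc, ← mul_assoc p, hpq, zero_mul, mul_zero]

/-- A product `a * b` with `a ∈ A p` and `b ∈ p A` vanishes only if one of its factors does. The
equations `a * p = a` and `p * b = b` encode these memberships for an idempotent `p`; the condition
is a two-sided substitute for `p A p` being a domain. -/
def NoZeroDivisorsThrough (p : A) : Prop :=
  ∀ a b : A, a * p = a → p * b = b → a * b = 0 → a = 0 ∨ b = 0

-- `n` is the sum of `p n q` and `q n p`, and their product `p n² p` vanishes.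
theorem peirce_component_of_anticommutator {p q n : A} (hq : NoZeroDivisorsThrough q)
    (hpq : p * q = 0) (hqp : q * p = 0) (hpn : p * n + n * p = n) (hqn : q * n + n * q = n)
    (hnn : n * n = 0) : (p * n = n ∧ n * q = n) ∨ (q * n = n ∧ n * p = n) := by
  have hright : p * n * q = p * n := by
    linear_combination (norm := noncomm_ring) p * hqn - hpq * n
  have hleft : q * (n * p) = n * p := by
    linear_combination (norm := noncomm_ring) hqn * p - n * hqp
  have hprod : p * n * (n * p) = 0 := by
    linear_combination (norm := noncomm_ring) p * hnn * p
  rcases hq _ _ hright hleft hprod with h | h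
  · rw [h, zero_add] at hpn
    exact .inr ⟨by rwa [hpn] at hleft, hpn⟩
  · rw [h, add_zero] at hpn
    exact .inl ⟨hpn, by rwa [hpn] at hright⟩

variable [FunLike 𝓕 A B] [AddMonoidHomClass 𝓕 A B] {ψ : 𝓕}

section Idempotent

variable (hψ : ∀ p, IsIdempotentElem p → IsIdempotentElem (ψ p)) {p q n m : A}

include hψ

theorem map_anticommute_of_orthogonal (hp : IsIdempotentElem p) (hq : IsIdempotentElem q)
    (hpq : p * q = 0) (hqp : q * p = 0) : ψ p * ψ q + ψ q * ψ p = 0 := by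
  have hadd := (hψ (p + q) (hp.add hq (by rw [hpq, hqp, add_zero]))).eq
  rw [map_add] at hadd
  linear_combination (norm := noncomm_ring) hadd - (hψ p hp).eq - (hψ q hq).eq

theorem map_square_zero_of_peirce (h2 : IsSMulRegular B 2) (hp : IsIdempotentElem p)
    (hpn : p * n + n * p = n) (hnn : n * n = 0) :
    ψ p * ψ n + ψ n * ψ p = ψ n ∧ ψ n * ψ n = 0 := by
  have hadd := (hψ (p + n) (by
    rw [IsIdempotentElem]
    linear_combination (norm := noncomm_ring) hp.eq + hpn + hnn)).eq
  have hsub := (hψ (p - n) (by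
    rw [IsIdempotentElem]
    linear_combination (norm := noncomm_ring) hp.eq - hpn + hnn)).eq
  rw [map_add] at hadd
  rw [map_sub] at hsub
  have hsq : ψ n * ψ n = 0 := by
    refine h2.right_eq_zero_of_smul ?_
    linear_combination (norm := noncomm_ring) hadd + hsub - 2 * (hψ p hp).eq
  exact ⟨by linear_combination (norm := noncomm_ring) hadd - (hψ p hp).eq - hsq, hsq⟩

theorem map_anticommute_of_peirce (h2 : IsSMulRegular B 2) (hp : IsIdempotentElem p)
    (hpn : p * n + n * p = n) (hpm : p * m + m * p = m) (hnn : n * n = 0) (hmm : m * m = 0)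
    (hnm : n * m + m * n = 0) : ψ n * ψ m + ψ m * ψ n = 0 := by
  have hadd := (map_square_zero_of_peirce hψ h2 hp (n := n + m)
    (by linear_combination (norm := noncomm_ring) hpn + hpm)
    (by linear_combination (norm := noncomm_ring) hnn + hmm + hnm)).2
  rw [map_add] at hadd
  linear_combination (norm := noncomm_ring) hadd
    - (map_square_zero_of_peirce hψ h2 hp hpn hnn).2
    - (map_square_zero_of_peirce hψ h2 hp hpm hmm).2

end Idempotent

section Tripotent

variable (hψ : ∀ a, a ^ 3 = a → ψ a ^ 3 = ψ a) {p q : A}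

include hψ

theorem map_mul_map_eq_zero_of_orthogonal (h2 : IsSMulRegular B 2) (h3 : IsSMulRegular B 3)
    (hp : IsIdempotentElem p) (hq : IsIdempotentElem q) (hpq : p * q = 0) (hqp : q * p = 0) :
    ψ p * ψ q = 0 := by
  have hadd : IsIdempotentElem (p + q) := hp.add hq (by rw [hpq, hqp, add_zero])
  have hsub : (p - q) ^ 3 = p - q := by
    have hsq : (p - q) * (p - q) = p + q := by
      rw [mul_sub, sub_mul, sub_mul, hp.eq, hq.eq, hpq, hqp]; abel
    rw [pow_succ, pow_two, hsq, mul_sub, add_mul, add_mul, hp.eq, hq.eq, hpq, hqp]; abel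
  exact mul_eq_zero_of_tripotent h2 h3 (hψ p (hp.pow_succ_eq 2)) (hψ q (hq.pow_succ_eq 2))
    (map_add ψ p q ▸ hψ _ (hadd.pow_succ_eq 2)) (map_sub ψ p q ▸ hψ _ hsub)

theorem map_mul_map_one (h2 : IsSMulRegular B 2) (h3 : IsSMulRegular B 3)
    (hp : IsIdempotentElem p) : ψ p * ψ 1 = ψ p * ψ p := by
  have h := map_mul_map_eq_zero_of_orthogonal hψ h2 h3 hp hp.one_sub hp.mul_one_sub_self
    hp.one_sub_mul_self
  rwa [map_sub, mul_sub, sub_eq_zero] at h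

theorem map_one_mul_map (h2 : IsSMulRegular B 2) (h3 : IsSMulRegular B 3)
    (hp : IsIdempotentElem p) : ψ 1 * ψ p = ψ p * ψ p := by
  have h := map_mul_map_eq_zero_of_orthogonal hψ h2 h3 hp.one_sub hp hp.one_sub_mul_self
    hp.mul_one_sub_self
  rwa [map_sub, sub_mul, sub_eq_zero] at h

end Tripotent

end Ring

section Algebra

variable {R A B : Type*} [CommRing R] [Ring A] [Ring B] [Algebra R A] [Algebra R B]
  {φ : A →ₗ[R] B}

theorem commute_map_one_of_surjective (h2 : IsSMulRegular B 2) (h3 : IsSMulRegular B 3)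
    (hspan : Submodule.span R {p : A | IsIdempotentElem p} = ⊤) (hφ : Function.Surjective φ)
    (htri : ∀ a, a ^ 3 = a → φ a ^ 3 = φ a) (b : B) : Commute (φ 1) b := by
  have hmaps : LinearMap.mulLeft R (φ 1) ∘ₗ φ = LinearMap.mulRight R (φ 1) ∘ₗ φ :=
    LinearMap.ext_on hspan fun p hp ↦
      (map_one_mul_map htri h2 h3 hp).trans (map_mul_map_one htri h2 h3 hp).symm
  obtain ⟨a, rfl⟩ := hφ b
  exact LinearMap.congr_fun hmaps a

theorem map_one_mul_self_of_surjective (h2 : IsSMulRegular B 2) (h3 : IsSMulRegular B 3)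
    (hspan : Submodule.span R {p : A | IsIdempotentElem p} = ⊤) (hφ : Function.Surjective φ)
    (htri : ∀ a, a ^ 3 = a → φ a ^ 3 = φ a) : φ 1 * φ 1 = 1 := by
  have hmaps : LinearMap.mulLeft R (φ 1 * φ 1) ∘ₗ φ = φ := by
    refine LinearMap.ext_on hspan fun p hp ↦ ?_
    calc φ 1 * φ 1 * φ p = φ p ^ 3 := by
          rw [mul_assoc, map_one_mul_map htri h2 h3 hp, ← mul_assoc,
            map_one_mul_map htri h2 h3 hp, pow_succ, pow_two]
      _ = φ p := htri p (hp.pow_succ_eq 2)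
  obtain ⟨a, ha⟩ := hφ 1
  simpa [ha] using LinearMap.congr_fun hmaps a

end Algebra

section MatrixUnit

variable {R X : Type*} [PartialOrder X]

open Classical in
/-- The matrix unit `e_xy` of an incidence algebra. It has value `1` at `(x, y)` and `0` elsewhere
if `x ≤ y`, and it is the zero function otherwise. -/
noncomputable def matrixUnit (R : Type*) [Zero R] [One R] (x y : X) : IncidenceAlgebra R X where
  toFun a b := if a = x ∧ b = y ∧ x ≤ y then 1 else 0
  eq_zero_of_not_le' _ _ hab := if_neg fun ⟨ha, hb, hxy⟩ ↦ hab (ha ▸ hb ▸ hxy)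

theorem matrixUnit_apply [Zero R] [One R] [DecidableEq X] {x y : X} (hxy : x ≤ y) (a b : X) :
    matrixUnit R x y a b = if a = x ∧ b = y then 1 else 0 := by
  classical
  rw [matrixUnit, coe_mk]
  simp only [hxy, and_true]

theorem matrixUnit_ne_zero [Zero R] [One R] [NeZero (1 : R)] {x y : X} (hxy : x ≤ y) :
    matrixUnit R x y ≠ 0 := by
  classical
  intro h
  have hval : matrixUnit R x y x y = 0 := by rw [h, IncidenceAlgebra.zero_apply]
  simp [matrixUnit_apply hxy] at hval

theorem incidenceAlgebra_sum_apply [AddCommMonoid R] {ι : Type*} (s : Finset ι)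
    (f : ι → IncidenceAlgebra R X) (a b : X) : (∑ i ∈ s, f i) a b = ∑ i ∈ s, f i a b :=
  map_sum (⟨⟨fun g ↦ g a b, rfl⟩, fun _ _ ↦ rfl⟩ : IncidenceAlgebra R X →+ R) f s

theorem sum_smul_matrixUnit [Semiring R] [Fintype X] (f : IncidenceAlgebra R X) :
    ∑ x, ∑ y, f x y • matrixUnit R x y = f := by
  ext a b hab
  simp only [incidenceAlgebra_sum_apply, constSMul_apply, matrixUnit, coe_mk, smul_eq_mul]
  rw [Finset.sum_eq_single a _ (by simp), Finset.sum_eq_single b _ (by simp)]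
  · simp [hab]
  · intro y _ hy
    simp [hy.symm]
  · intro x _ hx
    simp [hx.symm]

theorem span_matrixUnit [Semiring R] [Finite X] :
    Submodule.span R {f | ∃ x y : X, x ≤ y ∧ matrixUnit R x y = f} = ⊤ := by
  cases nonempty_fintype X
  refine eq_top_iff.2 fun f _ ↦ ?_
  rw [← sum_smul_matrixUnit f]
  refine sum_mem fun x _ ↦ sum_mem fun y _ ↦ ?_
  by_cases hxy : x ≤ y
  · exact Submodule.smul_mem _ _ (Submodule.subset_span ⟨x, y, hxy, rfl⟩)
  · rw [apply_eq_zero_of_not_le hxy, zero_smul]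
    exact zero_mem _

theorem bilinear_ext_matrixUnit [CommRing R] [Finite X] {M : Type*} [AddCommGroup M] [Module R M]
    {β γ : IncidenceAlgebra R X →ₗ[R] IncidenceAlgebra R X →ₗ[R] M}
    (h : ∀ x y u v : X, x ≤ y → u ≤ v →
      β (matrixUnit R x y) (matrixUnit R u v) = γ (matrixUnit R x y) (matrixUnit R u v)) :
    β = γ := by
  refine LinearMap.ext_on span_matrixUnit ?_
  rintro _ ⟨x, y, hxy, rfl⟩
  refine LinearMap.ext_on span_matrixUnit ?_
  rintro _ ⟨u, v, huv, rfl⟩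
  exact h x y u v hxy huv

variable [LocallyFiniteOrder X]

section Semiring

variable [Semiring R] {x y u v : X}

theorem matrixUnit_mul_matrixUnit_same (hxy : x ≤ y) (hyv : y ≤ v) :
    matrixUnit R x y * matrixUnit R y v = matrixUnit R x v := by
  classical
  ext a b
  simp only [mul_apply, matrixUnit_apply hxy, matrixUnit_apply hyv,
    matrixUnit_apply (hxy.trans hyv)]
  rw [Finset.sum_eq_single y (fun t _ hty ↦ by simp [hty])]
  · by_cases ha : a = x <;> simp [ha]
  · rintro hy
    have : ¬(a = x ∧ b = v) := fun ⟨ha, hb⟩ ↦ hy (by simp [ha, hb, hxy, hyv])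
    by_cases ha : a = x <;> simp_all

theorem matrixUnit_mul_matrixUnit_of_ne (hyu : y ≠ u) :
    matrixUnit R x y * matrixUnit R u v = 0 := by
  classical
  ext a b
  refine Finset.sum_eq_zero fun t _ ↦ ?_
  change (if a = x ∧ t = y ∧ x ≤ y then (1 : R) else 0) *
    (if t = u ∧ b = v ∧ u ≤ v then 1 else 0) = 0
  split_ifs with hy hu <;> simp_all

theorem isIdempotentElem_matrixUnit (x : X) : IsIdempotentElem (matrixUnit R x x) :=
  matrixUnit_mul_matrixUnit_same le_rfl le_rfl

theorem isIdempotentElem_matrixUnit_add_left (hxy : x < y) :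
    IsIdempotentElem (matrixUnit R x x + matrixUnit R x y) := by
  simp [IsIdempotentElem, add_mul, mul_add, matrixUnit_mul_matrixUnit_same,
    matrixUnit_mul_matrixUnit_of_ne, hxy.le, hxy.ne']

theorem isIdempotentElem_matrixUnit_add_right (hxy : x < y) :
    IsIdempotentElem (matrixUnit R y y + matrixUnit R x y) := by
  simp [IsIdempotentElem, add_mul, mul_add, matrixUnit_mul_matrixUnit_same,
    matrixUnit_mul_matrixUnit_of_ne, hxy.le, hxy.ne']

end Semiring

theorem span_isIdempotentElem [Ring R] [Finite X] :
    Submodule.span R {p : IncidenceAlgebra R X | IsIdempotentElem p} = ⊤ := by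
  rw [eq_top_iff, ← span_matrixUnit, Submodule.span_le]
  rintro _ ⟨x, y, hxy, rfl⟩
  have hdiag : matrixUnit R x x ∈ Submodule.span R {p | IsIdempotentElem p} :=
    Submodule.subset_span (isIdempotentElem_matrixUnit x)
  rcases hxy.eq_or_lt with rfl | hlt
  · exact hdiag
  · have hsum := Submodule.subset_span (R := R) (s := {p | IsIdempotentElem p})
      (isIdempotentElem_matrixUnit_add_left (R := R) hlt)
    have hdiff := sub_mem hsum hdiag
    rwa [add_sub_cancel_left] at hdiff

end MatrixUnit

section Connected

variable {X : Type*} [PartialOrder X]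

theorem PosetConnected.forall_of_forall_lt_iff (hconn : PosetConnected X) {P : X → Prop}
    (hP : ∀ x y, x < y → (P x ↔ P y)) {x : X} (hx : P x) (y : X) : P y := by
  induction hconn x y with
  | refl => exact hx
  | @tail y z _ hyz ih =>
    obtain rfl | hne := eq_or_ne y z
    · exact ih
    · rcases hyz with hyz | hzy
      · exact (hP y z (hyz.lt_of_ne hne)).1 ih
      · exact (hP z y (hzy.lt_of_ne hne.symm)).2 ih

variable {R : Type*} [CommRing R] [LocallyFiniteOrder X] [DecidableEq X]

theorem PosetConnected.isCentral_incidenceAlgebra (hconn : PosetConnected X) :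
    Algebra.IsCentral R (IncidenceAlgebra R X) where
  out := by
    intro f hf
    have hcomm (x y : X) : f * matrixUnit R x y = matrixUnit R x y * f :=
      (Subalgebra.mem_center_iff.1 hf _).symm
    have hoff {x y : X} (hxy : x ≤ y) (hne : x ≠ y) : f x y = 0 := by
      have h := congrArg (fun g : IncidenceAlgebra R X ↦ g x y) (hcomm y y)
      simpa [matrixUnit_apply, hxy, hne] using h
    have hdiag {x y : X} (hxy : x ≤ y) : f x x = f y y := by
      have h := congrArg (fun g : IncidenceAlgebra R X ↦ g x y) (hcomm x y)
      simpa [matrixUnit_apply, hxy] using h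
    rw [Algebra.mem_bot]
    rcases isEmpty_or_nonempty X with hX | ⟨⟨x⟩⟩
    · exact ⟨0, IncidenceAlgebra.ext fun a ↦ isEmptyElim a⟩
    · have hconst := hconn.forall_of_forall_lt_iff (P := fun y ↦ f y y = f x x)
        (fun y z hyz ↦ by rw [hdiag hyz.le]) rfl
      refine ⟨f x x, ?_⟩
      ext a b hab
      rw [Algebra.algebraMap_eq_smul_one, constSMul_apply, one_apply]
      split_ifs with h
      · rw [← h, hconst a, smul_eq_mul, mul_one]
      · rw [hoff hab h, smul_zero]

theorem PosetConnected.eq_one_or_eq_neg_one_of_commute [NoZeroDivisors R]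
    (hconn : PosetConnected X) {f : IncidenceAlgebra R X} (hf : ∀ g, Commute f g)
    (hsq : f * f = 1) : f = 1 ∨ f = -1 := by
  have hcentral : f ∈ Subalgebra.center R (IncidenceAlgebra R X) :=
    Subalgebra.mem_center_iff.2 fun g ↦ (hf g).eq.symm
  obtain ⟨c, rfl⟩ := Algebra.mem_bot.1 (hconn.isCentral_incidenceAlgebra.out hcentral)
  rcases isEmpty_or_nonempty X with hX | ⟨⟨x⟩⟩
  · exact .inl (IncidenceAlgebra.ext fun a ↦ isEmptyElim a)
  · have hc : c * c = 1 := by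
      have h := congrArg (fun g : IncidenceAlgebra R X ↦ g x x) hsq
      simpa [Algebra.algebraMap_eq_smul_one, constSMul_apply] using h
    rcases mul_self_eq_one_iff.1 hc with rfl | rfl
    · exact .inl (map_one _)
    · exact .inr (by rw [map_neg, map_one])

end Connected

section Diagonal

variable {R X : Type*} [PartialOrder X]

theorem exists_apply_ne_zero [Zero R] {f : IncidenceAlgebra R X} (hf : f ≠ 0) :
    ∃ a b, f a b ≠ 0 := by
  by_contra! h
  exact hf (IncidenceAlgebra.ext fun a b _ ↦ h a b)

variable [LocallyFiniteOrder X]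

section Semiring

variable [Semiring R] {p f : IncidenceAlgebra R X} {a b : X}

theorem exists_diag_ne_zero_of_mul_left_eq (h : p * f = f) (hab : f a b ≠ 0) :
    ∃ m, a ≤ m ∧ p m m ≠ 0 ∧ f m b ≠ 0 := by
  have hfin : {t | a ≤ t ∧ f t b ≠ 0}.Finite :=
    (Set.finite_Icc a b).subset fun t ht ↦ ⟨ht.1, le_of_ne_zero ht.2⟩
  obtain ⟨m, ⟨ham, hmb⟩, hmax⟩ := hfin.exists_maximal ⟨a, le_rfl, hab⟩
  have hsum : f m b = p m m * f m b := by
    conv_lhs => rw [← h, mul_apply]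
    refine Finset.sum_eq_single m (fun t ht htm ↦ ?_) fun hm ↦
      absurd (Finset.left_mem_Icc.2 (le_of_ne_zero hmb)) hm
    have hmt := (Finset.mem_Icc.1 ht).1
    by_cases htb : f t b = 0
    · rw [htb, mul_zero]
    · exact absurd ((hmax ⟨ham.trans hmt, htb⟩ hmt).antisymm hmt) htm
  exact ⟨m, ham, left_ne_zero_of_mul (hsum ▸ hmb), hmb⟩

theorem exists_diag_ne_zero_of_mul_right_eq (h : f * p = f) (hab : f a b ≠ 0) :
    ∃ m, m ≤ b ∧ p m m ≠ 0 ∧ f a m ≠ 0 := by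
  have hfin : {t | t ≤ b ∧ f a t ≠ 0}.Finite :=
    (Set.finite_Icc a b).subset fun t ht ↦ ⟨le_of_ne_zero ht.2, ht.1⟩
  obtain ⟨m, ⟨hmb, ham⟩, hmin⟩ := hfin.exists_minimal ⟨b, le_rfl, hab⟩
  have hsum : f a m = f a m * p m m := by
    conv_lhs => rw [← h, mul_apply]
    refine Finset.sum_eq_single m (fun t ht htm ↦ ?_) fun hm ↦
      absurd (Finset.right_mem_Icc.2 (le_of_ne_zero ham)) hm
    have htm' := (Finset.mem_Icc.1 ht).2
    by_cases hat : f a t = 0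
    · rw [hat, zero_mul]
    · exact absurd (htm'.antisymm (hmin ⟨htm'.trans hmb, hat⟩ htm')) htm
  exact ⟨m, hmb, right_ne_zero_of_mul (hsum ▸ ham), ham⟩

end Semiring

variable [Ring R] [NoZeroDivisors R]

theorem noZeroDivisorsThrough_of_diag [DecidableEq X] {p : IncidenceAlgebra R X} {u : X}
    (hu : ∀ w, p w w ≠ 0 → w = u) : NoZeroDivisorsThrough p := by
  intro f g hf hg hfg
  have hleft {a t : X} (h : f a t ≠ 0) : u ≤ t ∧ f a u ≠ 0 := by
    obtain ⟨m, hmt, hm, hfm⟩ := exists_diag_ne_zero_of_mul_right_eq hf h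
    obtain rfl := hu m hm
    exact ⟨hmt, hfm⟩
  have hright {t b : X} (h : g t b ≠ 0) : t ≤ u ∧ g u b ≠ 0 := by
    obtain ⟨m, htm, hm, hgm⟩ := exists_diag_ne_zero_of_mul_left_eq hg h
    obtain rfl := hu m hm
    exact ⟨htm, hgm⟩
  by_contra! hne
  obtain ⟨a, _, h⟩ := exists_apply_ne_zero hne.1
  have hfu := (hleft h).2
  obtain ⟨_, b, h⟩ := exists_apply_ne_zero hne.2
  have hgu := (hright h).2
  have hmul : (f * g) a b = f a u * g u b := by
    refine Finset.sum_eq_single u (fun t _ htu ↦ ?_) fun hu ↦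
      absurd (Finset.mem_Icc.2 ⟨le_of_ne_zero hfu, le_of_ne_zero hgu⟩) hu
    by_contra hne
    exact htu ((hright (right_ne_zero_of_mul hne)).1.antisymm
      (hleft (left_ne_zero_of_mul hne)).1)
  rw [hfg] at hmul
  exact mul_ne_zero hfu hgu hmul.symm

theorem exists_forall_diag_ne_zero_imp_eq [Finite X] {ι : Type*}
    (hcard : Nat.card X ≤ Nat.card ι) {p : ι → IncidenceAlgebra R X}
    (hidem : ∀ i, IsIdempotentElem (p i)) (hne : ∀ i, p i ≠ 0)
    (horth : Pairwise fun i j ↦ p i * p j = 0) (i : ι) : ∃ u, ∀ w, p i w w ≠ 0 → w = u := by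
  have heq {i j : ι} {w : X} (hi : p i w w ≠ 0) (hj : p j w w ≠ 0) : i = j := by
    by_contra hij
    have h := congrArg (fun f : IncidenceAlgebra R X ↦ f w w) (horth hij)
    exact mul_ne_zero hi hj (by simpa using h)
  have hdiag (i : ι) : ∃ w, p i w w ≠ 0 := by
    obtain ⟨_, _, h⟩ := exists_apply_ne_zero (hne i)
    obtain ⟨m, -, hm, -⟩ := exists_diag_ne_zero_of_mul_left_eq (hidem i) h
    exact ⟨m, hm⟩
  choose μ hμ using hdiag
  have hinj : Function.Injective μ := fun i j hij ↦ heq (hμ i) (hij ▸ hμ j)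
  refine ⟨μ i, fun w hw ↦ ?_⟩
  obtain ⟨j, rfl⟩ := (hinj.bijective_of_nat_card_le hcard).2 w
  rw [heq hw (hμ j)]

end Diagonal

section Jordan

/-- A map preserves the Jordan product `a * b + b * a`; additive maps with this property are the
Jordan homomorphisms. -/
def IsJordanHom {A B : Type*} [Mul A] [Add A] [Mul B] [Add B] (ψ : A → B) : Prop :=
  ∀ f g, ψ (f * g + g * f) = ψ f * ψ g + ψ g * ψ f

theorem IsJordanHom.map_mul_self {A B 𝓕 : Type*} [Mul A] [AddMonoid A] [Mul B] [AddMonoid B]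
    [FunLike 𝓕 A B] [AddMonoidHomClass 𝓕 A B] {ψ : 𝓕} (hψ : IsJordanHom ψ)
    (h2 : IsSMulRegular B 2) (f : A) : ψ (f * f) = ψ f * ψ f := by
  refine h2 ?_
  simpa only [two_nsmul, map_add] using hψ f f

theorem isSMulRegular_op {B : Type*} [Ring B] {n : ℕ} (hn : IsSMulRegular B n) :
    IsSMulRegular Bᵐᵒᵖ n := fun _ _ h ↦
  MulOpposite.unop_injective (hn (congrArg MulOpposite.unop h))

end Jordan

section MapMatrixUnit

variable {R X B : Type*} [CommRing R] [PartialOrder X] [Ring B] [Algebra R B]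
  {ψ : IncidenceAlgebra R X →ₗ[R] B} {x y z : X}

local notation "𝐞" => matrixUnit R

section IdempotentPreserving

variable [LocallyFiniteOrder X] {u v : X}
  (hψ : ∀ p, IsIdempotentElem p → IsIdempotentElem (ψ p))

include hψ

theorem map_matrixUnit_diag_anticommute_of_ne (hxy : x ≠ y) :
    ψ (𝐞 x x) * ψ (𝐞 y y) + ψ (𝐞 y y) * ψ (𝐞 x x) = 0 := by
  classical
  exact map_anticommute_of_orthogonal hψ (isIdempotentElem_matrixUnit x)
    (isIdempotentElem_matrixUnit y) (matrixUnit_mul_matrixUnit_of_ne hxy)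
    (matrixUnit_mul_matrixUnit_of_ne hxy.symm)

theorem map_matrixUnit_diag_anticommute_of_ne_of_ne (hux : u ≠ x) (huy : u ≠ y) (hxy : x < y) :
    ψ (𝐞 u u) * ψ (𝐞 x y) + ψ (𝐞 x y) * ψ (𝐞 u u) = 0 := by
  classical
  have hsum := map_anticommute_of_orthogonal hψ (isIdempotentElem_matrixUnit u)
    (isIdempotentElem_matrixUnit_add_left (R := R) hxy)
    (by simp only [mul_add, matrixUnit_mul_matrixUnit_of_ne hux, add_zero])
    (by simp only [add_mul, matrixUnit_mul_matrixUnit_of_ne hux.symm,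
      matrixUnit_mul_matrixUnit_of_ne huy.symm, add_zero])
  rw [map_add] at hsum
  linear_combination (norm := noncomm_ring) hsum - map_matrixUnit_diag_anticommute_of_ne hψ hux

variable (h2 : IsSMulRegular B 2)

include h2

theorem map_matrixUnit_peirce_left (hxy : x < y) :
    ψ (𝐞 x x) * ψ (𝐞 x y) + ψ (𝐞 x y) * ψ (𝐞 x x) = ψ (𝐞 x y) ∧
      ψ (𝐞 x y) * ψ (𝐞 x y) = 0 := by
  classical
  refine map_square_zero_of_peirce hψ h2 (isIdempotentElem_matrixUnit x) ?_
    (matrixUnit_mul_matrixUnit_of_ne hxy.ne')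
  rw [matrixUnit_mul_matrixUnit_same le_rfl hxy.le, matrixUnit_mul_matrixUnit_of_ne hxy.ne',
    add_zero]

theorem map_matrixUnit_peirce_right (hxy : x < y) :
    ψ (𝐞 y y) * ψ (𝐞 x y) + ψ (𝐞 x y) * ψ (𝐞 y y) = ψ (𝐞 x y) := by
  classical
  refine (map_square_zero_of_peirce hψ h2 (isIdempotentElem_matrixUnit y) ?_
    (matrixUnit_mul_matrixUnit_of_ne hxy.ne')).1
  rw [matrixUnit_mul_matrixUnit_same hxy.le le_rfl, matrixUnit_mul_matrixUnit_of_ne hxy.ne',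
    zero_add]

theorem map_matrixUnit_anticommute_of_lt_of_lt (hxy : x < y) (huv : u < v) (hxv : x ≠ v)
    (hyu : y ≠ u) : ψ (𝐞 x y) * ψ (𝐞 u v) + ψ (𝐞 u v) * ψ (𝐞 x y) = 0 := by
  classical
  have hnn := matrixUnit_mul_matrixUnit_of_ne (R := R) (x := x) (v := y) hxy.ne'
  have hmm := matrixUnit_mul_matrixUnit_of_ne (R := R) (x := u) (v := v) huv.ne'
  have hnm : 𝐞 x y * 𝐞 u v + 𝐞 u v * 𝐞 x y = 0 := by
    rw [matrixUnit_mul_matrixUnit_of_ne hyu, matrixUnit_mul_matrixUnit_of_ne hxv.symm, add_zero]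
  obtain rfl | hxu := eq_or_ne x u
  · refine map_anticommute_of_peirce hψ h2 (isIdempotentElem_matrixUnit x) ?_ ?_ hnn hmm hnm <;>
      simp only [matrixUnit_mul_matrixUnit_same, matrixUnit_mul_matrixUnit_of_ne, le_refl, hxy.le,
        huv.le, ne_eq, hxy.ne', huv.ne', not_false_eq_true, add_zero]
  · have hp : IsIdempotentElem (𝐞 x x + 𝐞 u u) :=
      (isIdempotentElem_matrixUnit x).add (isIdempotentElem_matrixUnit u) (by
        rw [matrixUnit_mul_matrixUnit_of_ne hxu, matrixUnit_mul_matrixUnit_of_ne hxu.symm,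
          add_zero])
    refine map_anticommute_of_peirce hψ h2 hp ?_ ?_ hnn hmm hnm <;>
      simp only [add_mul, mul_add, matrixUnit_mul_matrixUnit_same, matrixUnit_mul_matrixUnit_of_ne,
        le_refl, hxy.le, huv.le, ne_eq, hxy.ne', huv.ne', hxu, hxu.symm, hyu, hxv.symm,
        not_false_eq_true, add_zero, zero_add]

theorem map_matrixUnit_trans (hxy : x < y) (hyz : y < z) :
    ψ (𝐞 x y) * ψ (𝐞 y z) + ψ (𝐞 y z) * ψ (𝐞 x y) = ψ (𝐞 x z) := by
  classical
  have hxz := hxy.trans hyz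
  have hsum := (map_square_zero_of_peirce hψ h2 (n := 𝐞 y z + 𝐞 x z)
    (isIdempotentElem_matrixUnit_add_right (R := R) hxy)
    (by simp only [add_mul, mul_add, matrixUnit_mul_matrixUnit_same,
      matrixUnit_mul_matrixUnit_of_ne, le_refl, hxy.le, hyz.le, ne_eq, hxy.ne', hyz.ne', hxz.ne',
      not_false_eq_true, add_zero])
    (by simp only [add_mul, mul_add, matrixUnit_mul_matrixUnit_of_ne, ne_eq, hyz.ne', hxz.ne',
      not_false_eq_true, add_zero])).1
  simp only [map_add] at hsum
  linear_combination (norm := noncomm_ring) hsum - (map_matrixUnit_peirce_left hψ h2 hyz).1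
    - map_matrixUnit_diag_anticommute_of_ne_of_ne hψ hxy.ne' hyz.ne hxz
    - map_matrixUnit_anticommute_of_lt_of_lt hψ h2 hxy hxz hxz.ne hxy.ne'

theorem map_jordan_mul_matrixUnit_diag_lt (x : X) (huv : u < v) :
    ψ (𝐞 x x * 𝐞 u v + 𝐞 u v * 𝐞 x x) = ψ (𝐞 x x) * ψ (𝐞 u v) + ψ (𝐞 u v) * ψ (𝐞 x x) := by
  obtain rfl | hxu := eq_or_ne x u
  · rw [(map_matrixUnit_peirce_left hψ h2 huv).1, matrixUnit_mul_matrixUnit_same le_rfl huv.le,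
      matrixUnit_mul_matrixUnit_of_ne huv.ne', add_zero]
  obtain rfl | hxv := eq_or_ne x v
  · rw [map_matrixUnit_peirce_right hψ h2 huv, matrixUnit_mul_matrixUnit_same huv.le le_rfl,
      matrixUnit_mul_matrixUnit_of_ne huv.ne', zero_add]
  · rw [map_matrixUnit_diag_anticommute_of_ne_of_ne hψ hxu hxv huv,
      matrixUnit_mul_matrixUnit_of_ne hxu, matrixUnit_mul_matrixUnit_of_ne hxv.symm, add_zero,
      map_zero]

theorem map_jordan_mul_matrixUnit_lt_lt (hxy : x < y) (huv : u < v) :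
    ψ (𝐞 x y * 𝐞 u v + 𝐞 u v * 𝐞 x y) = ψ (𝐞 x y) * ψ (𝐞 u v) + ψ (𝐞 u v) * ψ (𝐞 x y) := by
  obtain rfl | hyu := eq_or_ne y u
  · rw [map_matrixUnit_trans hψ h2 hxy huv, matrixUnit_mul_matrixUnit_same hxy.le huv.le,
      matrixUnit_mul_matrixUnit_of_ne (hxy.trans huv).ne', add_zero]
  obtain rfl | hxv := eq_or_ne x v
  · rw [add_comm (ψ _ * _), map_matrixUnit_trans hψ h2 huv hxy,
      matrixUnit_mul_matrixUnit_same huv.le hxy.le,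
      matrixUnit_mul_matrixUnit_of_ne (huv.trans hxy).ne', zero_add]
  · rw [map_matrixUnit_anticommute_of_lt_of_lt hψ h2 hxy huv hxv hyu,
      matrixUnit_mul_matrixUnit_of_ne hyu, matrixUnit_mul_matrixUnit_of_ne hxv.symm, add_zero,
      map_zero]

theorem isJordanHom_of_isIdempotentElem [Finite X] : IsJordanHom ψ := by
  classical
  suffices h : (LinearMap.mul R _ + (LinearMap.mul R _).flip).compr₂ ψ =
      (LinearMap.mul R B + (LinearMap.mul R B).flip).compl₁₂ ψ ψ from
    fun f g ↦ LinearMap.congr_fun₂ h f g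
  refine bilinear_ext_matrixUnit fun x y u v hxy huv ↦ ?_
  change ψ (𝐞 x y * 𝐞 u v + 𝐞 u v * 𝐞 x y) = ψ (𝐞 x y) * ψ (𝐞 u v) + ψ (𝐞 u v) * ψ (𝐞 x y)
  obtain rfl | hxy := hxy.eq_or_lt <;> obtain rfl | huv := huv.eq_or_lt
  · obtain rfl | hxu := eq_or_ne x u
    · rw [map_add, (isIdempotentElem_matrixUnit x).eq, (hψ _ (isIdempotentElem_matrixUnit x)).eq]
    · rw [map_matrixUnit_diag_anticommute_of_ne hψ hxu, matrixUnit_mul_matrixUnit_of_ne hxu,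
        matrixUnit_mul_matrixUnit_of_ne hxu.symm, add_zero, map_zero]
  · exact map_jordan_mul_matrixUnit_diag_lt hψ h2 x huv
  · rw [add_comm (𝐞 x y * _), add_comm (ψ (𝐞 x y) * _)]
    exact map_jordan_mul_matrixUnit_diag_lt hψ h2 u hxy
  · exact map_jordan_mul_matrixUnit_lt_lt hψ h2 hxy huv

end IdempotentPreserving

/-- The image of the matrix unit `e_xy` under `ψ` lies in the Peirce component
`ψ e_xx * B * ψ e_yy`, as it does when `ψ` is multiplicative. -/
def IsForward (ψ : IncidenceAlgebra R X →ₗ[R] B) (x y : X) : Prop :=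
  ψ (𝐞 x x) * ψ (𝐞 x y) = ψ (𝐞 x y) ∧ ψ (𝐞 x y) * ψ (𝐞 y y) = ψ (𝐞 x y)

/-- The image of the matrix unit `e_xy` under `ψ` lies in the Peirce component
`ψ e_yy * B * ψ e_xx`, as it does when `ψ` is antimultiplicative. -/
def IsBackward (ψ : IncidenceAlgebra R X →ₗ[R] B) (x y : X) : Prop :=
  ψ (𝐞 y y) * ψ (𝐞 x y) = ψ (𝐞 x y) ∧ ψ (𝐞 x y) * ψ (𝐞 x x) = ψ (𝐞 x y)

/-- All strict comparabilities that involve the element `z` are forward for `ψ`. -/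
def IsForwardAt (ψ : IncidenceAlgebra R X →ₗ[R] B) (z : X) : Prop :=
  (∀ y, z < y → IsForward ψ z y) ∧ ∀ y, y < z → IsForward ψ y z

theorem isForward_op : IsForward ((MulOpposite.opLinearEquiv R).toLinearMap ∘ₗ ψ) x y ↔
    IsBackward ψ x y := by
  rw [IsForward, IsBackward, and_comm]
  exact and_congr MulOpposite.op_injective.eq_iff MulOpposite.op_injective.eq_iff

theorem isBackward_op : IsBackward ((MulOpposite.opLinearEquiv R).toLinearMap ∘ₗ ψ) x y ↔
    IsForward ψ x y := by
  rw [IsForward, IsBackward, and_comm]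
  exact and_congr MulOpposite.op_injective.eq_iff MulOpposite.op_injective.eq_iff

section JordanHom

variable [LocallyFiniteOrder X]

theorem IsJordanHom.op (hψ : IsJordanHom ψ) :
    IsJordanHom ((MulOpposite.opLinearEquiv R).toLinearMap ∘ₗ ψ) := fun f g ↦ by
  rw [add_comm (f * g)]
  exact congrArg MulOpposite.op (hψ g f)

variable (hψ : IsJordanHom ψ) (h2 : IsSMulRegular B 2)

include hψ h2

theorem IsJordanHom.isIdempotentElem_map_matrixUnit_diag (x : X) :
    IsIdempotentElem (ψ (𝐞 x x)) := by
  rw [IsIdempotentElem, ← hψ.map_mul_self h2, (isIdempotentElem_matrixUnit x).eq]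

theorem IsJordanHom.map_matrixUnit_diag_mul_of_ne (hxy : x ≠ y) : ψ (𝐞 x x) * ψ (𝐞 y y) = 0 := by
  refine mul_eq_zero_of_anticommute h2 (hψ.isIdempotentElem_map_matrixUnit_diag h2 x) ?_
  rw [← hψ, matrixUnit_mul_matrixUnit_of_ne hxy, matrixUnit_mul_matrixUnit_of_ne hxy.symm,
    add_zero, map_zero]

theorem IsJordanHom.map_matrixUnit_mul_self (hxy : x < y) : ψ (𝐞 x y) * ψ (𝐞 x y) = 0 := by
  rw [← hψ.map_mul_self h2, matrixUnit_mul_matrixUnit_of_ne hxy.ne', map_zero]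

theorem IsJordanHom.isForward_or_isBackward (hdom : NoZeroDivisorsThrough (ψ (𝐞 y y)))
    (hxy : x < y) : IsForward ψ x y ∨ IsBackward ψ x y := by
  refine peirce_component_of_anticommutator hdom (hψ.map_matrixUnit_diag_mul_of_ne h2 hxy.ne)
    (hψ.map_matrixUnit_diag_mul_of_ne h2 hxy.ne') ?_ ?_ (hψ.map_matrixUnit_mul_self h2 hxy)
  · rw [← hψ, matrixUnit_mul_matrixUnit_same le_rfl hxy.le,
      matrixUnit_mul_matrixUnit_of_ne hxy.ne', add_zero]
  · rw [← hψ, matrixUnit_mul_matrixUnit_same hxy.le le_rfl,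
      matrixUnit_mul_matrixUnit_of_ne hxy.ne', zero_add]

theorem IsJordanHom.map_mul_of_forall_isForward [Finite X]
    (hfwd : ∀ x y : X, x < y → IsForward ψ x y) (f g : IncidenceAlgebra R X) :
    ψ (f * g) = ψ f * ψ g := by
  classical
  have hfwd' {x y : X} (hxy : x ≤ y) : IsForward ψ x y := by
    obtain rfl | hlt := hxy.eq_or_lt
    · have hidem := (hψ.isIdempotentElem_map_matrixUnit_diag h2 x).eq
      exact ⟨hidem, hidem⟩
    · exact hfwd x y hlt
  have hmul_zero {x y u v : X} (hxy : x ≤ y) (huv : u ≤ v) (hyu : y ≠ u) :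
      ψ (𝐞 x y) * ψ (𝐞 u v) = 0 :=
    mul_eq_zero_of_mul_eq_zero_between (hψ.map_matrixUnit_diag_mul_of_ne h2 hyu) (hfwd' hxy).2
      (hfwd' huv).1
  suffices h : (LinearMap.mul R _).compr₂ ψ = (LinearMap.mul R B).compl₁₂ ψ ψ from
    LinearMap.congr_fun₂ h f g
  refine bilinear_ext_matrixUnit fun x y u v hxy huv ↦ ?_
  change ψ (𝐞 x y * 𝐞 u v) = ψ (𝐞 x y) * ψ (𝐞 u v)
  obtain rfl | hyu := eq_or_ne y u
  · obtain rfl | hvx := eq_or_ne v x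
    · obtain rfl := hxy.antisymm huv
      exact hψ.map_mul_self h2 _
    · have h := hψ (𝐞 x y) (𝐞 y v)
      rwa [matrixUnit_mul_matrixUnit_of_ne hvx, add_zero, hmul_zero huv hxy hvx, add_zero] at h
  · rw [hmul_zero hxy huv hyu, matrixUnit_mul_matrixUnit_of_ne hyu, map_zero]

section Orientation

variable (hdom : NoZeroDivisorsThrough (ψ (matrixUnit R z z)))

include hdom

theorem IsJordanHom.not_isBackward_of_common_source (hnezy : ψ (𝐞 z y) ≠ 0) {w : X}
    (hne : ψ (𝐞 z w) ≠ 0) (hzy : z < y) (hzw : z < w) (hfwd : IsForward ψ z y) :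
    ¬ IsBackward ψ z w := by
  intro hbwd
  have hzero : ψ (𝐞 z w) * ψ (𝐞 z y) = 0 := by
    obtain rfl | hyw := eq_or_ne y w
    · exact hψ.map_matrixUnit_mul_self h2 hzy
    · have h := hψ (𝐞 z w) (𝐞 z y)
      rwa [matrixUnit_mul_matrixUnit_of_ne hzw.ne', matrixUnit_mul_matrixUnit_of_ne hzy.ne',
        add_zero, map_zero, mul_eq_zero_of_mul_eq_zero_between
          (hψ.map_matrixUnit_diag_mul_of_ne h2 hyw) hfwd.2 hbwd.1, add_zero, eq_comm] at h
  exact (hdom _ _ hbwd.2 hfwd.1 hzero).elim hne hnezy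

theorem IsJordanHom.not_isBackward_of_common_target (hneyz : ψ (𝐞 y z) ≠ 0) {w : X}
    (hne : ψ (𝐞 w z) ≠ 0) (hyz : y < z) (hwz : w < z) (hfwd : IsForward ψ y z) :
    ¬ IsBackward ψ w z := by
  intro hbwd
  have hzero : ψ (𝐞 y z) * ψ (𝐞 w z) = 0 := by
    obtain rfl | hwy := eq_or_ne w y
    · exact hψ.map_matrixUnit_mul_self h2 hyz
    · have h := hψ (𝐞 y z) (𝐞 w z)
      rwa [matrixUnit_mul_matrixUnit_of_ne hwz.ne', matrixUnit_mul_matrixUnit_of_ne hyz.ne',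
        add_zero, map_zero, mul_eq_zero_of_mul_eq_zero_between
          (hψ.map_matrixUnit_diag_mul_of_ne h2 hwy) hbwd.2 hfwd.1, add_zero, eq_comm] at h
  exact (hdom _ _ hfwd.2 hbwd.1 hzero).elim hneyz hne

end Orientation

theorem IsJordanHom.not_isBackward_of_isForward_of_lt (hne : ψ (𝐞 x z) ≠ 0) (hxy : x < y)
    (hyz : y < z) (hfwd : IsForward ψ x y) : ¬ IsBackward ψ y z := by
  intro hbwd
  have h := hψ (𝐞 x y) (𝐞 y z)
  rw [matrixUnit_mul_matrixUnit_same hxy.le hyz.le,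
    matrixUnit_mul_matrixUnit_of_ne (hxy.trans hyz).ne', add_zero,
    mul_eq_zero_of_mul_eq_zero_between (hψ.map_matrixUnit_diag_mul_of_ne h2 hyz.ne) hfwd.2 hbwd.1,
    mul_eq_zero_of_mul_eq_zero_between (hψ.map_matrixUnit_diag_mul_of_ne h2 hxy.ne') hbwd.2 hfwd.1,
    add_zero] at h
  exact hne h

theorem IsJordanHom.not_isForward_of_isBackward_of_lt (hne : ψ (𝐞 x z) ≠ 0) (hxy : x < y)
    (hyz : y < z) (hbwd : IsBackward ψ x y) : ¬ IsForward ψ y z := fun hfwd ↦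
  hψ.op.not_isBackward_of_isForward_of_lt (isSMulRegular_op h2)
    (MulOpposite.op_ne_zero_iff _ |>.2 hne) hxy hyz (isForward_op.2 hbwd) (isBackward_op.2 hfwd)

variable (hdom : ∀ x, NoZeroDivisorsThrough (ψ (matrixUnit R x x)))
  (hne : ∀ x y, x < y → ψ (matrixUnit R x y) ≠ 0)

include hdom hne

theorem IsJordanHom.isForwardAt_left (hxy : x < y) (hfwd : IsForward ψ x y) :
    IsForwardAt ψ x :=
  ⟨fun w hxw ↦ (hψ.isForward_or_isBackward h2 (hdom w) hxw).resolve_right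
    (hψ.not_isBackward_of_common_source h2 (hdom x) (hne x y hxy) (hne x w hxw) hxy hxw hfwd),
  fun w hwx ↦ (hψ.isForward_or_isBackward h2 (hdom x) hwx).resolve_right fun hbwd ↦
    hψ.not_isForward_of_isBackward_of_lt h2 (hne w y (hwx.trans hxy)) hwx hxy hbwd hfwd⟩

theorem IsJordanHom.isForwardAt_right (hxy : x < y) (hfwd : IsForward ψ x y) :
    IsForwardAt ψ y :=
  ⟨fun w hyw ↦ (hψ.isForward_or_isBackward h2 (hdom w) hyw).resolve_right
    (hψ.not_isBackward_of_isForward_of_lt h2 (hne x w (hxy.trans hyw)) hxy hyw hfwd),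
  fun w hwy ↦ (hψ.isForward_or_isBackward h2 (hdom y) hwy).resolve_right
    (hψ.not_isBackward_of_common_target h2 (hdom y) (hne x y hxy) (hne w y hwy) hxy hwy hfwd)⟩

theorem IsJordanHom.forall_isForward_or_forall_isBackward (hconn : PosetConnected X) :
    (∀ x y, x < y → IsForward ψ x y) ∨ ∀ x y, x < y → IsBackward ψ x y := by
  refine or_iff_not_imp_right.2 fun hbwd ↦ ?_
  push Not at hbwd
  obtain ⟨x, y, hxy, hbwd⟩ := hbwd
  have hfwd := (hψ.isForward_or_isBackward h2 (hdom y) hxy).resolve_right hbwd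
  have hat (z : X) : IsForwardAt ψ z := by
    refine hconn.forall_of_forall_lt_iff (fun u v huv ↦ ⟨fun hu ↦ ?_, fun hv ↦ ?_⟩)
      (hψ.isForwardAt_left h2 hdom hne hxy hfwd) z
    · exact hψ.isForwardAt_right h2 hdom hne huv (hu.1 v huv)
    · exact hψ.isForwardAt_left h2 hdom hne huv (hv.2 u huv)
  exact fun u v huv ↦ (hat u).1 v huv

theorem IsJordanHom.map_mul_or_map_mul_rev [Finite X] (hconn : PosetConnected X) :
    (∀ f g, ψ (f * g) = ψ f * ψ g) ∨ ∀ f g, ψ (f * g) = ψ g * ψ f := by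
  refine (hψ.forall_isForward_or_forall_isBackward h2 hdom hne hconn).imp
    (hψ.map_mul_of_forall_isForward h2) fun hbwd f g ↦ ?_
  exact MulOpposite.op_injective (hψ.op.map_mul_of_forall_isForward (isSMulRegular_op h2)
    (fun x y hxy ↦ isForward_op.2 (hbwd x y hxy)) f g)

end JordanHom

end MapMatrixUnit

section Domain

variable {R X : Type*} [CommRing R] [IsDomain R] [PartialOrder X]

theorem isSMulRegular_incidenceAlgebra_of_ringChar_ne {q : ℕ} (hq : q.Prime)
    (hR : ringChar R ≠ q) : IsSMulRegular (IncidenceAlgebra R X) q := fun f g h ↦ by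
  have hqR : (q : R) ≠ 0 := CharP.cast_ne_zero_of_ne_of_prime R hq hR
  ext a b
  have hab := congrArg (fun k : IncidenceAlgebra R X ↦ k a b) h
  simpa [hqR] using hab

variable [LocallyFiniteOrder X]

theorem map_mul_or_map_mul_rev_of_isIdempotentElem [Finite X] (h2 : ringChar R ≠ 2)
    (hconn : PosetConnected X) {ψ : IncidenceAlgebra R X →ₗ[R] IncidenceAlgebra R X}
    (hinj : Function.Injective ψ) (hψ : ∀ p, IsIdempotentElem p → IsIdempotentElem (ψ p)) :
    (∀ f g, ψ (f * g) = ψ f * ψ g) ∨ ∀ f g, ψ (f * g) = ψ g * ψ f := by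
  classical
  have hreg : IsSMulRegular (IncidenceAlgebra R X) 2 :=
    isSMulRegular_incidenceAlgebra_of_ringChar_ne Nat.prime_two h2
  have hjordan := isJordanHom_of_isIdempotentElem hψ hreg
  have hne {x y : X} (hxy : x ≤ y) : ψ (matrixUnit R x y) ≠ 0 :=
    (map_ne_zero_iff ψ hinj).2 (matrixUnit_ne_zero hxy)
  have hdiag := exists_forall_diag_ne_zero_imp_eq le_rfl
    (fun x ↦ hψ _ (isIdempotentElem_matrixUnit x)) (fun x ↦ hne le_rfl)
    fun x y hxy ↦ hjordan.map_matrixUnit_diag_mul_of_ne hreg hxy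
  refine hjordan.map_mul_or_map_mul_rev hreg (fun x ↦ ?_) (fun x y hxy ↦ hne hxy.le) hconn
  obtain ⟨u, hu⟩ := hdiag x
  exact noZeroDivisorsThrough_of_diag hu

theorem map_mul_or_map_mul_rev_of_tripotent [Finite X] [DecidableEq X] (h2 : ringChar R ≠ 2)
    (h3 : ringChar R ≠ 3) (hconn : PosetConnected X)
    {φ : IncidenceAlgebra R X →ₗ[R] IncidenceAlgebra R X} (hinj : Function.Injective φ)
    (htri : ∀ f, f ^ 3 = f → φ f ^ 3 = φ f) (hone : φ 1 = 1) :
    (∀ f g, φ (f * g) = φ f * φ g) ∨ ∀ f g, φ (f * g) = φ g * φ f := by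
  refine map_mul_or_map_mul_rev_of_isIdempotentElem h2 hconn hinj fun p hp ↦ ?_
  have h := map_mul_map_one htri (isSMulRegular_incidenceAlgebra_of_ringChar_ne Nat.prime_two h2)
    (isSMulRegular_incidenceAlgebra_of_ringChar_ne Nat.prime_three h3) hp
  rw [hone, mul_one] at h
  exact h.symm

end Domain

theorem stmt_16_general {X : Type*} [PartialOrder X] [Finite X] [LocallyFiniteOrder X]
    [DecidableEq X] {R : Type*} [CommRing R] [IsDomain R] (h2 : ringChar R ≠ 2)
    (h3 : ringChar R ≠ 3) (hconn : PosetConnected X)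
    (φ : IncidenceAlgebra R X →ₗ[R] IncidenceAlgebra R X) (hbij : Function.Bijective φ)
    (htri : ∀ f : IncidenceAlgebra R X, f ^ 3 = f → φ f ^ 3 = φ f) :
    ∃ (r : R) (ψ : IncidenceAlgebra R X →ₗ[R] IncidenceAlgebra R X),
      (r = 1 ∨ r = -1) ∧ Function.Bijective ψ ∧
      ((∀ f g : IncidenceAlgebra R X, ψ (f * g) = ψ f * ψ g) ∨
        (∀ f g : IncidenceAlgebra R X, ψ (f * g) = ψ g * ψ f)) ∧
      φ = r • ψ := by
  have hreg2 : IsSMulRegular (IncidenceAlgebra R X) 2 :=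
    isSMulRegular_incidenceAlgebra_of_ringChar_ne Nat.prime_two h2
  have hreg3 : IsSMulRegular (IncidenceAlgebra R X) 3 :=
    isSMulRegular_incidenceAlgebra_of_ringChar_ne Nat.prime_three h3
  rcases hconn.eq_one_or_eq_neg_one_of_commute
    (commute_map_one_of_surjective hreg2 hreg3 span_isIdempotentElem hbij.2 htri)
    (map_one_mul_self_of_surjective hreg2 hreg3 span_isIdempotentElem hbij.2 htri) with hone | hone
  · exact ⟨1, φ, .inl rfl, hbij,
      map_mul_or_map_mul_rev_of_tripotent h2 h3 hconn hbij.1 htri hone, (one_smul R φ).symm⟩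
  · have hbij_neg : Function.Bijective (-φ) := neg_involutive.bijective.comp hbij
    have htri_neg (f : IncidenceAlgebra R X) (hf : f ^ 3 = f) : (-φ) f ^ 3 = (-φ) f := by
      rw [LinearMap.neg_apply, Odd.neg_pow (by decide), htri f hf]
    refine ⟨-1, -φ, .inr rfl, hbij_neg, ?_, ?_⟩
    · exact map_mul_or_map_mul_rev_of_tripotent h2 h3 hconn hbij_neg.1 htri_neg
        (by rw [LinearMap.neg_apply, hone, neg_neg])
    · ext f : 1
      simp

/-- over a field of characteristic `∉ {2,3}`, every bijective linear tripotent
preserver of the incidence algebra of a finite connected poset is `r·ψ` with `r ∈ {−1,1}` and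
`ψ` an automorphism or anti-automorphism. -/
theorem stmt_16 {X : Type*} [PartialOrder X] [Fintype X] [LocallyFiniteOrder X] [DecidableEq X]
    {F : Type*} [Field F] (h2 : ringChar F ≠ 2) (h3 : ringChar F ≠ 3)
    (hconn : PosetConnected X)
    (φ : IncidenceAlgebra F X →ₗ[F] IncidenceAlgebra F X)
    (hbij : Function.Bijective φ)
    (htri : ∀ f : IncidenceAlgebra F X, f ^ 3 = f → (φ f) ^ 3 = φ f) :
    ∃ (r : F) (ψ : IncidenceAlgebra F X →ₗ[F] IncidenceAlgebra F X),
      (r = 1 ∨ r = -1) ∧ Function.Bijective ψ ∧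
      ((∀ f g : IncidenceAlgebra F X, ψ (f * g) = ψ f * ψ g) ∨
        (∀ f g : IncidenceAlgebra F X, ψ (f * g) = ψ g * ψ f)) ∧
      φ = r • ψ :=
  stmt_16_general h2 h3 hconn φ hbij htri
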